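/- For every fixed x ∈ ℝ³ and every k ∈ ℝ, the function G(x,y) = e^{ik‖x−y‖}/(4π‖x−y‖) is a fundamental solution of the Helmholtz operator with the Dirac delta at x as forcing: for every smooth compactly supported function φ : ℝ³ → ℂ one has ∫_{ℝ³} G(x,y)·(Δφ(y) + k² φ(y)) dy = −φ(x), where the integral is with respect to Lebesgue measure on ℝ³. -/

import Mathlib

open Complex MeasureTheory

/-- The Laplacian of a function `f : ℝ³ → ℂ`: the sum of its second partial
derivatives along the three coordinate directions. -/
noncomputable def laplacian3 (f : EuclideanSpace ℝ (Fin 3) → ℂ)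
    (y : EuclideanSpace ℝ (Fin 3)) : ℂ :=
  ∑ i : Fin 3,
    fderiv ℝ (fun z => fderiv ℝ f z (EuclideanSpace.single i (1 : ℝ))) y
      (EuclideanSpace.single i (1 : ℝ))

/-- The Helmholtz fundamental solution `G(x,y) = e^{ik‖x−y‖}/(4π‖x−y‖)`. -/
noncomputable def helmholtzKernel (k : ℝ) (x y : EuclideanSpace ℝ (Fin 3)) : ℂ :=
  Complex.exp (Complex.I * (k : ℂ) * (‖x - y‖ : ℝ)) / (4 * (Real.pi : ℂ) * (‖x - y‖ : ℝ))

/-!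
Let `g(r) = e^{ikr}/(4πr)` and centre the coordinates at `x`. Since `‖y‖⁻¹ g(‖y‖)` is locally
integrable, one integration by parts crosses the singularity without a boundary term:
`∫ g Δφ = -∫ g'(‖y‖) ∂ᵣφ`. In polar coordinates what is left to compute is, up to sign, the integral
`∫₀^∞ (r² g' ∂ᵣφ - k² r² g φ) dr` on the ray through each unit vector `ω`. As `(r² g')' = -k² r² g`,
the integrand is the derivative of `r² g'(r) φ(rω)`, so only the flux `r² g'(r) → -1/(4π)` at the
origin survives, and integrating over the sphere of area `4π` gives `-φ(x)`.
-/

section FundamentalSolution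

open Set Filter Metric Module Laplacian
open scoped Topology

theorem eventually_smul_notMem_tsupport {E F : Type*} [NormedAddCommGroup E] [NormedSpace ℝ E]
    [Zero F] {f : E → F} (hf : HasCompactSupport f) {y : E} (hy : y ≠ 0) :
    ∀ᶠ t : ℝ in atTop, t • y ∉ tsupport f := by
  have hescape : Tendsto (fun t : ℝ => t • y) atTop (Bornology.cobounded E) := by
    rw [← tendsto_norm_atTop_iff_cobounded]
    simpa only [norm_smul] using
      tendsto_norm_atTop_atTop.atTop_mul_const (norm_pos_iff.mpr hy)
  exact hescape.eventually (Bornology.isBounded_def.mp hf.isCompact.isBounded)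

theorem integrable_smul_fderiv {E 𝕜 F : Type*} [NormedAddCommGroup E] [NormedSpace ℝ E]
    [MeasurableSpace E] [BorelSpace E] {μ : Measure E} [NormedField 𝕜] [NormedAddCommGroup F]
    [NormedSpace ℝ F] [NormedSpace 𝕜 F] {f : E → 𝕜} {φ : E → F} (hf : LocallyIntegrable f μ)
    (hφ : ContDiff ℝ 1 φ) (hsupp : HasCompactSupport φ) (v : E) :
    Integrable (fun y => f y • fderiv ℝ φ y v) μ :=
  hf.integrable_smul_right_of_hasCompactSupport
    ((hφ.continuous_fderiv one_ne_zero).clm_apply continuous_const) (hsupp.fderiv_apply ℝ v)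

section IsolatedSingularity

variable {E : Type*} [NormedAddCommGroup E] [NormedSpace ℝ E] [FiniteDimensional ℝ E]

/-- The smooth cutoff `y ↦ 1 - b (t y)`, for a fixed bump function `b` equal to `1` near the origin.
It removes a ball of radius `1 / t` around the origin, and tends to `1` elsewhere as `t → ∞`. -/
noncomputable def originCutoff (t : ℝ) (y : E) : ℝ :=
  1 - (default : ContDiffBump (0 : E)) (t • y)

theorem contDiff_originCutoff (t : ℝ) : ContDiff ℝ 1 (originCutoff t : E → ℝ) :=
  contDiff_const.sub ((ContDiffBump.contDiff _).comp (contDiff_const_smul t))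

theorem norm_originCutoff_le_one (t : ℝ) (y : E) : ‖originCutoff t y‖ ≤ 1 := by
  have h0 := (default : ContDiffBump (0 : E)).nonneg (x := t • y)
  have h1 := (default : ContDiffBump (0 : E)).le_one (x := t • y)
  rw [originCutoff, Real.norm_eq_abs, abs_le]
  constructor <;> linarith

theorem zero_notMem_tsupport_originCutoff (t : ℝ) :
    (0 : E) ∉ tsupport (originCutoff t) := by
  rw [notMem_tsupport_iff_eventuallyEq]
  have hsmul : Tendsto (fun y : E => t • y) (𝓝 0) (𝓝 0) := by
    simpa using (continuous_const_smul t).tendsto (0 : E)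
  filter_upwards [hsmul.eventually (default : ContDiffBump (0 : E)).eventuallyEq_one] with y hy
  simp [originCutoff, hy]

theorem eventually_originCutoff_eq_one {y : E} (hy : y ≠ 0) :
    ∀ᶠ t : ℝ in atTop, originCutoff t y = 1 := by
  filter_upwards [eventually_smul_notMem_tsupport
    (default : ContDiffBump (0 : E)).hasCompactSupport hy] with t ht
  simp [originCutoff, image_eq_zero_of_notMem_tsupport ht]

theorem fderiv_originCutoff (t : ℝ) (y : E) :
    fderiv ℝ (originCutoff t) y =
      -(t • fderiv ℝ (default : ContDiffBump (0 : E)) (t • y)) := by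
  unfold originCutoff
  rw [fderiv_const_sub, fderiv_comp_smul]

theorem eventually_fderiv_originCutoff_eq_zero {y : E} (hy : y ≠ 0) :
    ∀ᶠ t : ℝ in atTop, fderiv ℝ (originCutoff t) y = 0 := by
  filter_upwards [eventually_smul_notMem_tsupport
    ((default : ContDiffBump (0 : E)).hasCompactSupport.fderiv ℝ) hy] with t ht
  rw [fderiv_originCutoff, image_eq_zero_of_notMem_tsupport ht, smul_zero, neg_zero]

theorem fderiv_originCutoff_zero (t : ℝ) : fderiv ℝ (originCutoff t) (0 : E) = 0 :=
  fderiv_of_notMem_tsupport ℝ (zero_notMem_tsupport_originCutoff t)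

theorem exists_norm_fderiv_originCutoff_le :
    ∃ C : ℝ, ∀ (t : ℝ) (y : E), ‖fderiv ℝ (originCutoff t) y‖ ≤ C * ‖y‖⁻¹ := by
  set b : ContDiffBump (0 : E) := default with hb
  have hcont : Continuous fun u : E => ‖u‖ • fderiv ℝ b u :=
    continuous_norm.smul ((b.contDiff (n := 1)).continuous_fderiv one_ne_zero)
  have hsupp : HasCompactSupport fun u : E => ‖u‖ • fderiv ℝ b u :=
    (b.hasCompactSupport.fderiv ℝ).smul_left (f := norm)
  obtain ⟨C, hC⟩ := hcont.bounded_above_of_compact_support hsupp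
  refine ⟨C, fun t y => ?_⟩
  rcases eq_or_ne y 0 with rfl | hy
  · simp [fderiv_originCutoff_zero]
  · rw [← div_eq_mul_inv, le_div_iff₀ (norm_pos_iff.mpr hy)]
    calc ‖fderiv ℝ (originCutoff t) y‖ * ‖y‖ = ‖‖t • y‖ • fderiv ℝ b (t • y)‖ := by
          rw [fderiv_originCutoff, ← hb, norm_neg, norm_smul, norm_smul, norm_norm, norm_smul]
          ring
      _ ≤ C := hC _

variable {F : Type*} [NormedAddCommGroup F] [NormedSpace ℝ F] {H : E → F} {v : E}

theorem exists_norm_fderiv_originCutoff_smul_le (H : E → F) (v : E) :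
    ∃ C : ℝ, ∀ (t : ℝ) (y : E),
      ‖fderiv ℝ (originCutoff t) y v • H y‖ ≤ C * ‖‖y‖⁻¹ • H y‖ := by
  obtain ⟨C, hC⟩ := exists_norm_fderiv_originCutoff_le (E := E)
  refine ⟨C * ‖v‖, fun t y => ?_⟩
  calc ‖fderiv ℝ (originCutoff t) y v • H y‖
      ≤ C * ‖y‖⁻¹ * ‖v‖ * ‖H y‖ := by
        rw [norm_smul]
        gcongr
        exact (fderiv ℝ (originCutoff t) y).le_of_opNorm_le (hC t y) v
    _ = C * ‖v‖ * ‖‖y‖⁻¹ • H y‖ := by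
        rw [norm_smul, norm_inv, norm_norm]
        ring

variable [MeasurableSpace E] [BorelSpace E] {μ : Measure E}

theorem aestronglyMeasurable_originCutoff (t : ℝ) :
    AEStronglyMeasurable (originCutoff t : E → ℝ) μ :=
  (contDiff_originCutoff t).continuous.aestronglyMeasurable

theorem aestronglyMeasurable_fderiv_originCutoff_smul (hH : AEStronglyMeasurable H μ) (t : ℝ) :
    AEStronglyMeasurable (fun y => fderiv ℝ (originCutoff t) y v • H y) μ :=
  (((contDiff_originCutoff t).continuous_fderiv one_ne_zero).clm_apply
    continuous_const).aestronglyMeasurable.smul hH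

theorem integral_originCutoff_smul_fderiv [μ.IsAddHaarMeasure]
    (hdiff : ∀ y ≠ 0, DifferentiableAt ℝ H y)
    (hH : Integrable H μ) (hH' : Integrable (fun y => ‖y‖⁻¹ • H y) μ)
    (hderiv : Integrable (fun y => fderiv ℝ H y v) μ) (t : ℝ) :
    ∫ y, originCutoff t y • fderiv ℝ H y v ∂μ =
      -∫ y, fderiv ℝ (originCutoff t) y v • H y ∂μ := by
  have hχ := (contDiff_originCutoff (E := E) t).differentiable one_ne_zero
  have hbound : ∀ᵐ y ∂μ, ‖originCutoff t y‖ ≤ 1 := .of_forall (norm_originCutoff_le_one t)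
  obtain ⟨C, hC⟩ := exists_norm_fderiv_originCutoff_smul_le H v
  have hχ'H : Integrable (fun y => fderiv ℝ (originCutoff t) y v • H y) μ :=
    (hH'.norm.const_mul C).mono' (aestronglyMeasurable_fderiv_originCutoff_smul hH.1 t)
      (.of_forall (hC t))
  refine integral_smul_fderiv_eq_neg_fderiv_smul_of_integrable hχ'H
    (hderiv.bdd_smul _ (aestronglyMeasurable_originCutoff t) hbound)
    (hH.bdd_smul _ (aestronglyMeasurable_originCutoff t) hbound)
    (fun y _ => hχ y) fun y hy => hdiff y ?_
  rintro rfl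
  exact zero_notMem_tsupport_originCutoff t hy

theorem tendsto_integral_originCutoff_smul [NullSingletonClass μ] {f : E → F}
    (hf : Integrable f μ) :
    Tendsto (fun t => ∫ y, originCutoff t y • f y ∂μ) atTop (𝓝 (∫ y, f y ∂μ)) := by
  refine tendsto_integral_filter_of_dominated_convergence (fun y => ‖f y‖)
    (.of_forall fun t => (aestronglyMeasurable_originCutoff t).smul hf.1)
    (.of_forall fun t => .of_forall fun y => ?_) hf.norm ?_
  · rw [norm_smul]
    exact mul_le_of_le_one_left (norm_nonneg _) (norm_originCutoff_le_one t y)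
  · filter_upwards [Measure.ae_ne μ 0] with y hy
    refine tendsto_nhds_of_eventually_eq ?_
    filter_upwards [eventually_originCutoff_eq_one hy] with t ht
    rw [ht, one_smul]

theorem tendsto_integral_fderiv_originCutoff_smul [NullSingletonClass μ]
    (hH : AEStronglyMeasurable H μ) (hH' : Integrable (fun y => ‖y‖⁻¹ • H y) μ) :
    Tendsto (fun t => ∫ y, fderiv ℝ (originCutoff t) y v • H y ∂μ) atTop (𝓝 0) := by
  obtain ⟨C, hC⟩ := exists_norm_fderiv_originCutoff_smul_le H v
  rw [← integral_zero E F (μ := μ)]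
  refine tendsto_integral_filter_of_dominated_convergence (fun y => C * ‖‖y‖⁻¹ • H y‖)
    (.of_forall fun t => aestronglyMeasurable_fderiv_originCutoff_smul hH t)
    (.of_forall fun t => .of_forall (hC t)) (hH'.norm.const_mul C) ?_
  filter_upwards [Measure.ae_ne μ 0] with y hy
  refine tendsto_nhds_of_eventually_eq ?_
  filter_upwards [eventually_fderiv_originCutoff_eq_zero hy] with t ht
  rw [ht, zero_apply, zero_smul]

theorem integral_fderiv_eq_zero_of_differentiableAt_ne_zero [Nontrivial E] [μ.IsAddHaarMeasure]
    (hdiff : ∀ y ≠ 0, DifferentiableAt ℝ H y)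
    (hH : Integrable H μ) (hH' : Integrable (fun y => ‖y‖⁻¹ • H y) μ)
    (hderiv : Integrable (fun y => fderiv ℝ H y v) μ) :
    ∫ y, fderiv ℝ H y v ∂μ = 0 := by
  refine tendsto_nhds_unique (tendsto_integral_originCutoff_smul hderiv) ?_
  simp_rw [integral_originCutoff_smul_fderiv hdiff hH hH' hderiv]
  simpa only [neg_zero] using (tendsto_integral_fderiv_originCutoff_smul hH.1 hH').neg

end IsolatedSingularity

section Polar

variable {E : Type*} [NormedAddCommGroup E] [NormedSpace ℝ E] [FiniteDimensional ℝ E]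
  [Nontrivial E] [MeasurableSpace E] [BorelSpace E] {μ : Measure E} [μ.IsAddHaarMeasure]
  {F : Type*} [NormedAddCommGroup F] {f : E → F}

theorem integrable_polar (hf : Integrable f μ) :
    Integrable (fun p : sphere (0 : E) 1 × Ioi (0 : ℝ) => f ((p.2 : ℝ) • (p.1 : E)))
      (μ.toSphere.prod (.volumeIoiPow (finrank ℝ E - 1))) := by
  rw [← μ.measurePreserving_homeomorphUnitSphereProd.integrable_comp_emb
    (Homeomorph.measurableEmbedding _)]
  rw [← restrict_compl_singleton (μ := μ) 0, ← IntegrableOn,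
    integrableOn_iff_comap_subtypeVal (measurableSet_singleton _).compl] at hf
  refine hf.congr (.of_forall fun y => ?_)
  simp [smul_inv_smul₀ (norm_ne_zero_iff.mpr y.2)]

variable [NormedSpace ℝ F]

theorem integrable_volumeIoiPow_iff {n : ℕ} {g : ℝ → F} :
    Integrable (fun r : Ioi (0 : ℝ) => g r) (.volumeIoiPow n) ↔
      IntegrableOn (fun r => r ^ n • g r) (Ioi 0) := by
  rw [integrableOn_iff_comap_subtypeVal measurableSet_Ioi, Measure.volumeIoiPow,
    integrable_withDensity_iff_integrable_smul' (by fun_prop) (by simp)]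
  refine integrable_congr (.of_forall fun r => ?_)
  simp [ENNReal.toReal_ofReal (pow_nonneg (mem_Ioi.mp r.2).le n)]

theorem integral_volumeIoiPow (n : ℕ) (g : ℝ → F) :
    ∫ r : Ioi (0 : ℝ), g r ∂(.volumeIoiPow n) = ∫ r in Ioi 0, r ^ n • g r := by
  rw [Measure.volumeIoiPow, integral_withDensity_eq_integral_toReal_smul (by fun_prop) (by simp),
    ← integral_subtype_comap measurableSet_Ioi fun r : ℝ => r ^ n • g r]
  refine integral_congr_ae (.of_forall fun r => ?_)
  simp [ENNReal.toReal_ofReal (pow_nonneg (mem_Ioi.mp r.2).le n)]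

theorem integral_polar (hf : Integrable f μ) :
    ∫ y, f y ∂μ = ∫ ω : sphere (0 : E) 1,
      ∫ r in Ioi (0 : ℝ), r ^ (finrank ℝ E - 1) • f (r • (ω : E)) ∂volume ∂μ.toSphere := by
  calc ∫ y, f y ∂μ
      = ∫ y : ({0}ᶜ : Set E), f y ∂(μ.comap (↑)) := by
        rw [integral_subtype_comap (measurableSet_singleton _).compl f, restrict_compl_singleton]
    _ = ∫ p : sphere (0 : E) 1 × Ioi (0 : ℝ), f ((p.2 : ℝ) • (p.1 : E))
          ∂(μ.toSphere.prod (.volumeIoiPow (finrank ℝ E - 1))) := by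
        rw [← μ.measurePreserving_homeomorphUnitSphereProd.integral_comp
          (Homeomorph.measurableEmbedding _)]
        refine integral_congr_ae (.of_forall fun y => ?_)
        simp [smul_inv_smul₀ (norm_ne_zero_iff.mpr y.2)]
    _ = ∫ ω : sphere (0 : E) 1, ∫ r : Ioi (0 : ℝ), f ((r : ℝ) • (ω : E))
          ∂(.volumeIoiPow (finrank ℝ E - 1)) ∂μ.toSphere :=
        integral_prod _ (integrable_polar hf)
    _ = _ := integral_congr_ae (.of_forall fun ω =>
        integral_volumeIoiPow _ fun r => f (r • (ω : E)))

theorem ae_integrableOn_ray (hf : Integrable f μ) :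
    ∀ᵐ ω : sphere (0 : E) 1 ∂μ.toSphere,
      IntegrableOn (fun r => r ^ (finrank ℝ E - 1) • f (r • (ω : E))) (Ioi (0 : ℝ)) := by
  filter_upwards [(integrable_polar hf).prod_right_ae] with ω hω
  exact integrable_volumeIoiPow_iff.mp hω

theorem integral_eq_neg_smul_of_hasDerivAt_ray [CompleteSpace F] (hf : Integrable f μ)
    {U : E → ℝ → F} {c : F}
    (hderiv : ∀ ω ∈ sphere (0 : E) 1, ∀ r ∈ Ioi (0 : ℝ),
      HasDerivAt (U ω) (r ^ (finrank ℝ E - 1) • f (r • ω)) r)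
    (hcont : ∀ ω ∈ sphere (0 : E) 1, ContinuousWithinAt (U ω) (Ici 0) 0)
    (hzero : ∀ ω ∈ sphere (0 : E) 1, U ω 0 = c)
    (htop : ∀ ω ∈ sphere (0 : E) 1, Tendsto (U ω) atTop (𝓝 0)) :
    ∫ y, f y ∂μ = -(μ.toSphere.real univ • c) := by
  rw [integral_polar hf, ← smul_neg, ← integral_const]
  refine integral_congr_ae ?_
  filter_upwards [ae_integrableOn_ray hf] with ω hω
  rw [integral_Ioi_of_hasDerivAt_of_tendsto (hcont ω ω.2) (hderiv ω ω.2) hω (htop ω ω.2),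
    hzero ω ω.2, zero_sub]

end Polar

section Laplacian

variable {E : Type*} [NormedAddCommGroup E] [InnerProductSpace ℝ E] [FiniteDimensional ℝ E]
  {F : Type*} [NormedAddCommGroup F] [NormedSpace ℝ F] {φ : E → F}

theorem laplacian_eq_sum_fderiv_fderiv {ι : Type*} [Fintype ι]
    (b : OrthonormalBasis ι ℝ E) (hφ : ContDiff ℝ 2 φ) (y : E) :
    Δ φ y = ∑ i, fderiv ℝ (fun z => fderiv ℝ φ z (b i)) y (b i) := by
  have hdiff := (hφ.fderiv_right (m := 1) le_rfl).differentiable one_ne_zero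
  rw [InnerProductSpace.laplacian_eq_iteratedFDeriv_orthonormalBasis φ b]
  refine Finset.sum_congr rfl fun i _ => ?_
  rw [iteratedFDeriv_two_apply, fderiv_clm_apply (hdiff y) (differentiableAt_const _)]
  simp

theorem integrable_smul_laplacian [MeasurableSpace E] [BorelSpace E] {μ : Measure E} {𝕜 : Type*}
    [NormedField 𝕜] [NormedSpace 𝕜 F] {f : E → 𝕜} (hf : LocallyIntegrable f μ)
    (hφ : ContDiff ℝ 2 φ) (hsupp : HasCompactSupport φ) :
    Integrable (fun y => f y • Δ φ y) μ := by
  simp_rw [laplacian_eq_sum_fderiv_fderiv (stdOrthonormalBasis ℝ E) hφ, Finset.smul_sum]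
  exact integrable_finsetSum _ fun i _ => integrable_smul_fderiv hf
    ((hφ.fderiv_right le_rfl).clm_apply contDiff_const) (hsupp.fderiv_apply ℝ _) _

end Laplacian

section Radial

variable {E : Type*} [NormedAddCommGroup E] [InnerProductSpace ℝ E]
  {𝕜 : Type*} [NormedField 𝕜] [NormedAlgebra ℝ 𝕜] {g g' : ℝ → 𝕜}
  {F : Type*} [NormedAddCommGroup F] [NormedSpace ℝ F] [NormedSpace 𝕜 F] [IsScalarTower ℝ 𝕜 F]
  {φ : E → F}

theorem hasFDerivAt_norm {y : E} (hy : y ≠ 0) :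
    HasFDerivAt (fun z : E => ‖z‖) (‖y‖⁻¹ • innerSL ℝ y) y := by
  have hsqrt := (hasStrictFDerivAt_norm_sq y).hasFDerivAt.sqrt (by simpa using hy)
  simp only [Real.sqrt_sq (norm_nonneg _)] at hsqrt
  refine hsqrt.congr_fderiv ?_
  ext v
  simp only [one_div, smul_apply, innerSL_apply_apply, smul_eq_mul, nsmul_eq_mul,
    Nat.cast_ofNat]
  field_simp

theorem hasFDerivAt_radial (hg : ∀ r > 0, HasDerivAt g (g' r) r) {y : E} (hy : y ≠ 0) :
    HasFDerivAt (fun z : E => g ‖z‖)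
      (ContinuousLinearMap.toSpanSingleton ℝ (g' ‖y‖) ∘SL (‖y‖⁻¹ • innerSL ℝ y)) y :=
  (hg ‖y‖ (norm_pos_iff.mpr hy)).hasFDerivAt.comp y (hasFDerivAt_norm hy)

theorem fderiv_radial_smul (hg : ∀ r > 0, HasDerivAt g (g' r) r) {y : E} (hy : y ≠ 0)
    (hφ : DifferentiableAt ℝ φ y) (v : E) :
    fderiv ℝ (fun z => g ‖z‖ • φ z) y v =
      g ‖y‖ • fderiv ℝ φ y v + (inner ℝ y v / ‖y‖) • g' ‖y‖ • φ y := by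
  have hradial := hasFDerivAt_radial hg hy
  rw [fderiv_fun_smul hradial.differentiableAt hφ, hradial.fderiv]
  simp [div_eq_inv_mul, mul_smul]

theorem sum_inner_div_norm_smul_map {ι : Type*} [Fintype ι] (b : OrthonormalBasis ι ℝ E) (a : 𝕜)
    (L : E →L[ℝ] F) (y : E) :
    ∑ i, (inner ℝ y (b i) / ‖y‖) • a • L (b i) = a • L (‖y‖⁻¹ • y) := by
  have hexpand : L y = ∑ i, inner ℝ y (b i) • L (b i) := by
    conv_lhs => rw [← b.sum_repr' y]
    simp only [map_sum, map_smul, real_inner_comm]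
  rw [map_smul, hexpand, Finset.smul_sum, Finset.smul_sum]
  refine Finset.sum_congr rfl fun i _ => ?_
  rw [div_eq_inv_mul, mul_smul, smul_comm a, smul_comm a]

variable [FiniteDimensional ℝ E] [MeasurableSpace E] [BorelSpace E] {μ : Measure E}

theorem integrable_inner_div_norm_smul {f : E → F} (hf : Integrable f μ) (v : E) :
    Integrable (fun y => (inner ℝ y v / ‖y‖) • f y) μ := by
  refine hf.bdd_smul ‖v‖
    (by fun_prop : Measurable fun y : E => inner ℝ y v / ‖y‖).aestronglyMeasurable
    (.of_forall fun y => ?_)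
  rw [norm_div, norm_norm]
  exact div_le_of_le_mul₀ (norm_nonneg _) (norm_nonneg _)
    ((norm_inner_le_norm y v).trans_eq (mul_comm _ _))

theorem integrable_smul_fderiv_inv_norm_smul {f : E → 𝕜} (hf : LocallyIntegrable f μ)
    (hφ : ContDiff ℝ 1 φ) (hsupp : HasCompactSupport φ) :
    Integrable (fun y => f y • fderiv ℝ φ y (‖y‖⁻¹ • y)) μ := by
  simp_rw [← sum_inner_div_norm_smul_map (stdOrthonormalBasis ℝ E)]
  exact integrable_finsetSum _ fun i _ =>
    integrable_inner_div_norm_smul (integrable_smul_fderiv hf hφ hsupp _) _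

variable [Nontrivial E] [μ.IsAddHaarMeasure]

theorem locallyIntegrable_of_inv_norm_smul {f : E → 𝕜}
    (hf : LocallyIntegrable (fun y => ‖y‖⁻¹ • f y) μ) : LocallyIntegrable f μ := by
  refine (hf.continuous_smul continuous_norm).congr ?_
  filter_upwards [Measure.ae_ne μ 0] with y hy
  exact smul_inv_smul₀ (norm_ne_zero_iff.mpr hy) _

theorem integral_radial_smul_fderiv (hg : ∀ r > 0, HasDerivAt g (g' r) r)
    (hgint : LocallyIntegrable (fun y : E => ‖y‖⁻¹ • g ‖y‖) μ)
    (hg'int : LocallyIntegrable (fun y : E => g' ‖y‖) μ)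
    (hφ : ContDiff ℝ 1 φ) (hsupp : HasCompactSupport φ) (v : E) :
    ∫ y, g ‖y‖ • fderiv ℝ φ y v ∂μ = -∫ y, (inner ℝ y v / ‖y‖) • g' ‖y‖ • φ y ∂μ := by
  have hgloc := locallyIntegrable_of_inv_norm_smul hgint
  have hsing : Integrable (fun y => ‖y‖⁻¹ • g ‖y‖ • φ y) μ := by
    simpa only [smul_assoc] using
      hgint.integrable_smul_right_of_hasCompactSupport hφ.continuous hsupp
  have hmain : Integrable (fun y => g ‖y‖ • fderiv ℝ φ y v) μ :=
    integrable_smul_fderiv hgloc hφ hsupp v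
  have hradial : Integrable (fun y => (inner ℝ y v / ‖y‖) • g' ‖y‖ • φ y) μ :=
    integrable_inner_div_norm_smul
      (hg'int.integrable_smul_right_of_hasCompactSupport hφ.continuous hsupp) v
  have hprod : (fun y => fderiv ℝ (fun z => g ‖z‖ • φ z) y v) =ᵐ[μ]
      fun y => g ‖y‖ • fderiv ℝ φ y v + (inner ℝ y v / ‖y‖) • g' ‖y‖ • φ y := by
    filter_upwards [Measure.ae_ne μ 0] with y hy
    exact fderiv_radial_smul hg hy (hφ.differentiable one_ne_zero y) v
  rw [eq_neg_iff_add_eq_zero, ← integral_add hmain hradial, ← integral_congr_ae hprod]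
  refine integral_fderiv_eq_zero_of_differentiableAt_ne_zero (fun y hy => ?_)
    (hgloc.integrable_smul_right_of_hasCompactSupport hφ.continuous hsupp) hsing
    ((hmain.add hradial).congr hprod.symm)
  exact (hasFDerivAt_radial hg hy).differentiableAt.smul (hφ.differentiable one_ne_zero y)

theorem integral_radial_smul_laplacian (hg : ∀ r > 0, HasDerivAt g (g' r) r)
    (hgint : LocallyIntegrable (fun y : E => ‖y‖⁻¹ • g ‖y‖) μ)
    (hg'int : LocallyIntegrable (fun y : E => g' ‖y‖) μ)
    (hφ : ContDiff ℝ 2 φ) (hsupp : HasCompactSupport φ) :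
    ∫ y, g ‖y‖ • Δ φ y ∂μ = -∫ y, g' ‖y‖ • fderiv ℝ φ y (‖y‖⁻¹ • y) ∂μ := by
  have hgloc := locallyIntegrable_of_inv_norm_smul hgint
  set b := stdOrthonormalBasis ℝ E
  have hφ' (i) : ContDiff ℝ 1 fun y => fderiv ℝ φ y (b i) :=
    (hφ.fderiv_right le_rfl).clm_apply contDiff_const
  have hsupp' (i) : HasCompactSupport fun y => fderiv ℝ φ y (b i) := hsupp.fderiv_apply ℝ (b i)
  calc ∫ y, g ‖y‖ • Δ φ y ∂μ
      = ∑ i, ∫ y, g ‖y‖ • fderiv ℝ (fun z => fderiv ℝ φ z (b i)) y (b i) ∂μ := by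
        simp_rw [laplacian_eq_sum_fderiv_fderiv b hφ, Finset.smul_sum]
        exact integral_finsetSum _ fun i _ =>
          integrable_smul_fderiv hgloc (hφ' i) (hsupp' i) (b i)
    _ = -∑ i, ∫ y, (inner ℝ y (b i) / ‖y‖) • g' ‖y‖ • fderiv ℝ φ y (b i) ∂μ := by
        simp_rw [integral_radial_smul_fderiv hg hgint hg'int (hφ' _) (hsupp' _),
          Finset.sum_neg_distrib]
    _ = -∫ y, g' ‖y‖ • fderiv ℝ φ y (‖y‖⁻¹ • y) ∂μ := by
        rw [← integral_finsetSum _ fun i _ => integrable_inner_div_norm_smul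
          (hg'int.integrable_smul_right_of_hasCompactSupport (hφ' i).continuous (hsupp' i)) (b i)]
        simp_rw [sum_inner_div_norm_smul_map b]

end Radial

section RadialSolution

variable {E : Type*} [NormedAddCommGroup E] [InnerProductSpace ℝ E]
  {𝕜 : Type*} [NormedField 𝕜] [NormedAlgebra ℝ 𝕜]
  {F : Type*} [NormedAddCommGroup F] [NormedSpace ℝ F] [NormedSpace 𝕜 F] [IsScalarTower ℝ 𝕜 F]
  {φ : E → F}

/-- `g` is a radial profile solving `Δ u + c u = 0` away from the origin of a space of dimension
`n + 1`, that is `(rⁿ g')' + c rⁿ g = 0`. The ODE is encoded as a first-order system for `g` and the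
flux `p = rⁿ g'`, which is required to extend continuously to `r = 0`. -/
structure IsRadialSolution (n : ℕ) (c : 𝕜) (g p : ℝ → 𝕜) : Prop where
  hasDerivAt_profile : ∀ r > 0, HasDerivAt g ((r ^ n)⁻¹ • p r) r
  hasDerivAt_flux : ∀ r > 0, HasDerivAt p (-(r ^ n • (c * g r))) r
  continuousWithinAt_flux : ContinuousWithinAt p (Ici 0) 0

variable {n : ℕ} {c : 𝕜} {g p : ℝ → 𝕜}

theorem IsRadialSolution.continuousOn_flux (h : IsRadialSolution n c g p) :
    ContinuousOn p (Ici 0) := by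
  intro r hr
  rcases (mem_Ici.mp hr).eq_or_lt with rfl | hr
  · exact h.continuousWithinAt_flux
  · exact (h.hasDerivAt_flux r hr).continuousAt.continuousWithinAt

theorem IsRadialSolution.hasDerivAt_flux_smul_ray (h : IsRadialSolution n c g p)
    (hφ : Differentiable ℝ φ) {ω : E} (hω : ω ∈ sphere (0 : E) 1) {r : ℝ} (hr : 0 < r) :
    HasDerivAt (fun s => p s • φ (s • ω))
      (r ^ n • (((‖r • ω‖ ^ n)⁻¹ • p ‖r • ω‖) • fderiv ℝ φ (r • ω) (‖r • ω‖⁻¹ • r • ω) -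
        (c * g ‖r • ω‖) • φ (r • ω))) r := by
  have hnorm : ‖r • ω‖ = r := by
    rw [norm_smul, mem_sphere_zero_iff_norm.mp hω, mul_one, Real.norm_of_nonneg hr.le]
  have hray : HasDerivAt (fun s : ℝ => s • ω) ω r := by
    simpa using (hasDerivAt_id r).smul_const ω
  have hφray : HasDerivAt (fun s : ℝ => φ (s • ω)) (fderiv ℝ φ (r • ω) ω) r :=
    (hφ (r • ω)).hasFDerivAt.comp_hasDerivAt r hray
  refine ((h.hasDerivAt_flux r hr).smul hφray).congr_deriv ?_
  rw [hnorm, inv_smul_smul₀ hr.ne', smul_sub, smul_assoc, smul_inv_smul₀ (pow_pos hr n).ne',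
    neg_smul, smul_assoc, sub_eq_add_neg]

variable [FiniteDimensional ℝ E] [Nontrivial E] [MeasurableSpace E] [BorelSpace E]
  {μ : Measure E} [μ.IsAddHaarMeasure]

theorem locallyIntegrable_inv_norm_pow (hn : n < finrank ℝ E) :
    LocallyIntegrable (fun y : E => (‖y‖ ^ n)⁻¹) μ := by
  refine locallyIntegrable_of_norm_le_rpow (C := 1) (α := n) finrank_pos (by exact_mod_cast hn)
    (.of_forall fun y => ?_) (by fun_prop : Measurable _).aestronglyMeasurable
  rw [Real.rpow_neg (norm_nonneg y), Real.rpow_natCast, one_mul, norm_inv, norm_pow, norm_norm]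

theorem IsRadialSolution.locallyIntegrable_deriv (h : IsRadialSolution n c g p)
    (hn : n < finrank ℝ E) : LocallyIntegrable (fun y : E => (‖y‖ ^ n)⁻¹ • p ‖y‖) μ :=
  (locallyIntegrable_inv_norm_pow hn).smul_continuous
    (h.continuousOn_flux.comp_continuous continuous_norm norm_nonneg)

theorem IsRadialSolution.integral_deriv_smul_sub [CompleteSpace F]
    (h : IsRadialSolution (finrank ℝ E - 1) c g p)
    (hφ : Differentiable ℝ φ) (hsupp : HasCompactSupport φ)
    (hint : Integrable (fun y => ((‖y‖ ^ (finrank ℝ E - 1))⁻¹ • p ‖y‖) •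
      fderiv ℝ φ y (‖y‖⁻¹ • y) - (c * g ‖y‖) • φ y) μ) :
    ∫ y, (((‖y‖ ^ (finrank ℝ E - 1))⁻¹ • p ‖y‖) • fderiv ℝ φ y (‖y‖⁻¹ • y) -
      (c * g ‖y‖) • φ y) ∂μ = -(μ.toSphere.real univ • p 0 • φ 0) := by
  refine integral_eq_neg_smul_of_hasDerivAt_ray (U := fun ω s => p s • φ (s • ω)) hint
    (fun ω hω r hr => h.hasDerivAt_flux_smul_ray hφ hω hr)
    (fun ω _ => h.continuousWithinAt_flux.smul
      (hφ.continuous.comp (continuous_id.smul continuous_const)).continuousWithinAt)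
    (fun ω _ => by rw [zero_smul]) fun ω hω => ?_
  refine tendsto_nhds_of_eventually_eq ?_
  filter_upwards [eventually_smul_notMem_tsupport hsupp (ne_zero_of_mem_unit_sphere ⟨ω, hω⟩)]
    with s hs
  rw [image_eq_zero_of_notMem_tsupport hs, smul_zero]

theorem IsRadialSolution.integral_smul_laplacian_add [CompleteSpace F]
    (h : IsRadialSolution (finrank ℝ E - 1) c g p)
    (hgint : LocallyIntegrable (fun y : E => ‖y‖⁻¹ • g ‖y‖) μ)
    (hφ : ContDiff ℝ 2 φ) (hsupp : HasCompactSupport φ) :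
    ∫ y, g ‖y‖ • (Δ φ y + c • φ y) ∂μ = μ.toSphere.real univ • p 0 • φ 0 := by
  have hgloc := locallyIntegrable_of_inv_norm_smul hgint
  set g' : ℝ → 𝕜 := fun r => (r ^ (finrank ℝ E - 1))⁻¹ • p r
  have hg'int : LocallyIntegrable (fun y : E => g' ‖y‖) μ :=
    h.locallyIntegrable_deriv (Nat.sub_lt finrank_pos one_pos)
  have hzeroth : Integrable (fun y => (c * g ‖y‖) • φ y) μ := by
    simpa only [Pi.smul_def, smul_smul] using
      (hgloc.integrable_smul_right_of_hasCompactSupport hφ.continuous hsupp).smul c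
  have hfirst : Integrable (fun y => g' ‖y‖ • fderiv ℝ φ y (‖y‖⁻¹ • y)) μ :=
    integrable_smul_fderiv_inv_norm_smul hg'int (hφ.of_le one_le_two) hsupp
  calc ∫ y, g ‖y‖ • (Δ φ y + c • φ y) ∂μ
      = ∫ y, g ‖y‖ • Δ φ y ∂μ + ∫ y, (c * g ‖y‖) • φ y ∂μ := by
        rw [← integral_add (integrable_smul_laplacian hgloc hφ hsupp) hzeroth]
        simp_rw [smul_add, smul_smul, mul_comm]
    _ = -∫ y, (g' ‖y‖ • fderiv ℝ φ y (‖y‖⁻¹ • y) - (c * g ‖y‖) • φ y) ∂μ := by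
        rw [integral_radial_smul_laplacian h.hasDerivAt_profile hgint hg'int hφ hsupp,
          integral_sub hfirst hzeroth]
        abel
    _ = μ.toSphere.real univ • p 0 • φ 0 := by
        rw [h.integral_deriv_smul_sub (hφ.differentiable two_ne_zero) hsupp
          (hfirst.sub hzeroth), neg_neg]

end RadialSolution

section Helmholtz

/-- The Helmholtz fundamental solution `e^{iκr}/(4πr)` of `ℝ³` as a function of the
distance `r`, for a complex wavenumber `κ`. -/
noncomputable def helmholtzProfile (κ : ℂ) (r : ℝ) : ℂ :=
  exp (I * κ * r) / (4 * (Real.pi : ℂ) * r)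

/-- The flux `r² g'(r)` of `g = helmholtzProfile κ`, in a form that is continuous at `r = 0`. -/
noncomputable def helmholtzFlux (κ : ℂ) (r : ℝ) : ℂ :=
  (I * κ * r - 1) * exp (I * κ * r) / (4 * (Real.pi : ℂ))

theorem hasDerivAt_cexp_I_mul (κ : ℂ) (r : ℝ) :
    HasDerivAt (fun s : ℝ => exp (I * κ * s)) (exp (I * κ * r) * (I * κ)) r := by
  simpa using ((hasDerivAt_id (r : ℂ)).const_mul (I * κ)).cexp.comp_ofReal

theorem isRadialSolution_helmholtzProfile (κ : ℂ) :
    IsRadialSolution 2 (κ ^ 2) (helmholtzProfile κ) (helmholtzFlux κ) where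
  hasDerivAt_profile r hr := by
    have hr' : (r : ℂ) ≠ 0 := mod_cast hr.ne'
    have hden : HasDerivAt (fun s : ℝ => 4 * (Real.pi : ℂ) * s) (4 * (Real.pi : ℂ)) r := by
      simpa using (hasDerivAt_id r).ofReal_comp.const_mul (4 * (Real.pi : ℂ))
    refine ((hasDerivAt_cexp_I_mul κ r).div hden (by simp [hr'])).congr_deriv ?_
    rw [helmholtzFlux, Complex.real_smul]
    push_cast
    field_simp
  hasDerivAt_flux r _ := by
    have hlin : HasDerivAt (fun s : ℝ => I * κ * s - 1) (I * κ) r := by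
      simpa using ((hasDerivAt_id r).ofReal_comp.const_mul (I * κ)).sub_const 1
    refine ((hlin.mul (hasDerivAt_cexp_I_mul κ r)).div_const (4 * (Real.pi : ℂ))).congr_deriv ?_
    rw [helmholtzProfile, Complex.real_smul]
    push_cast
    field_simp
    ring_nf
    simp only [I_sq]
    ring
  continuousWithinAt_flux := by
    unfold helmholtzFlux
    fun_prop

theorem four_pi_smul_helmholtzFlux_zero (κ : ℂ) :
    (4 * Real.pi) • helmholtzFlux κ 0 = -1 := by
  rw [helmholtzFlux, Complex.real_smul]
  push_cast
  field_simp
  simp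

variable {E : Type*} [NormedAddCommGroup E] [InnerProductSpace ℝ E] [FiniteDimensional ℝ E]
  [MeasurableSpace E] [BorelSpace E]

theorem locallyIntegrable_inv_norm_smul_helmholtzProfile [Nontrivial E] {μ : Measure E}
    [μ.IsAddHaarMeasure] (hE : 2 < finrank ℝ E) (κ : ℂ) :
    LocallyIntegrable (fun y : E => ‖y‖⁻¹ • helmholtzProfile κ ‖y‖) μ := by
  have hcont : Continuous fun y : E => exp (I * κ * ‖y‖) / (4 * (Real.pi : ℂ)) := by fun_prop
  refine ((locallyIntegrable_inv_norm_pow hE).smul_continuous hcont).congr (.of_forall fun y => ?_)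
  simp only [helmholtzProfile, Complex.real_smul]
  push_cast
  ring

theorem toSphere_real_univ_of_finrank_eq_three (hE : finrank ℝ E = 3) :
    (volume : Measure E).toSphere.real univ = 4 * Real.pi := by
  have : Nontrivial E := nontrivial_of_finrank_pos (R := ℝ) (by omega)
  have hball : volume (ball (0 : E) 1) = .ofReal (Real.pi * 4 / 3) := by
    rw [InnerProductSpace.volume_ball_of_dim_odd (k := 1) hE, hE]
    norm_num
  rw [Measure.toSphere_real_apply_univ, measureReal_def, hball,
    ENNReal.toReal_ofReal (by positivity), hE]
  push_cast
  ring

theorem helmholtzKernel_fundamental_solution_general (hE : finrank ℝ E = 3) {F : Type*}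
    [NormedAddCommGroup F] [NormedSpace ℂ F] [CompleteSpace F] (x : E) (κ : ℂ) {φ : E → F}
    (hφ : ContDiff ℝ 2 φ) (hsupp : HasCompactSupport φ) :
    ∫ y, helmholtzProfile κ ‖x - y‖ • (Δ φ y + κ ^ 2 • φ y) = -φ x := by
  have : Nontrivial E := nontrivial_of_finrank_pos (R := ℝ) (by omega)
  have hsol : IsRadialSolution (finrank ℝ E - 1) (κ ^ 2) (helmholtzProfile κ) (helmholtzFlux κ) :=
    hE ▸ isRadialSolution_helmholtzProfile κ
  have hshift (y : E) : Δ φ (x + y) = Δ (fun z => φ (x + z)) y := by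
    simp [InnerProductSpace.laplacian_eq_iteratedFDeriv_stdOrthonormalBasis,
      iteratedFDeriv_comp_add_left]
  have hφx : ContDiff ℝ 2 fun z => φ (x + z) := hφ.comp (contDiff_const.add contDiff_id)
  have hsuppx : HasCompactSupport fun z => φ (x + z) :=
    hsupp.comp_homeomorph (Homeomorph.addLeft x)
  calc ∫ y, helmholtzProfile κ ‖x - y‖ • (Δ φ y + κ ^ 2 • φ y)
      = ∫ y, helmholtzProfile κ ‖y‖ • (Δ (fun z => φ (x + z)) y + κ ^ 2 • φ (x + y)) := by
        rw [← integral_add_left_eq_self _ x]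
        simp only [sub_add_cancel_left, norm_neg, hshift]
    _ = (4 * Real.pi) • helmholtzFlux κ 0 • φ (x + 0) := by
        rw [hsol.integral_smul_laplacian_add
          (locallyIntegrable_inv_norm_smul_helmholtzProfile (by omega) κ) hφx hsuppx,
          toSphere_real_univ_of_finrank_eq_three hE]
    _ = -φ x := by
        rw [add_zero, ← smul_assoc, four_pi_smul_helmholtzFlux_zero, neg_one_smul]

end Helmholtz

theorem laplacian3_eq_laplacian {φ : EuclideanSpace ℝ (Fin 3) → ℂ} (hφ : ContDiff ℝ 2 φ) :
    laplacian3 φ = Δ φ := by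
  funext y
  simp only [laplacian3, laplacian_eq_sum_fderiv_fderiv (EuclideanSpace.basisFun (Fin 3) ℝ) hφ,
    EuclideanSpace.basisFun_apply]

end FundamentalSolution

theorem helmholtzKernel_fundamental_solution (x : EuclideanSpace ℝ (Fin 3)) (k : ℝ)
    (φ : EuclideanSpace ℝ (Fin 3) → ℂ) (hφ : ContDiff ℝ (⊤ : ℕ∞) φ)
    (hsupp : HasCompactSupport φ) :
    ∫ y, helmholtzKernel k x y * (laplacian3 φ y + (k : ℂ) ^ 2 * φ y)
        ∂(volume : Measure (EuclideanSpace ℝ (Fin 3)))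
      = -φ x := by
  have hφ2 : ContDiff ℝ 2 φ := contDiff_infty.mp hφ 2
  rw [laplacian3_eq_laplacian hφ2]
  exact helmholtzKernel_fundamental_solution_general (by simp) x k hφ2 hsupp
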